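/- arXiv:1710.04293 — 2 statements merged into one kernel-verified Lean document; each statement's English description precedes it below -/
import Mathlib

section
/- For every sequence of integers 0 ≤ μ_1 < μ_2 < ⋯ < μ_s ≤ n-1, the squarefree product P := Z_{μ_1} · Z_{μ_2} · ⋯ · Z_{μ_s} ∈ K_t, where t = μ_1 + ⋯ + μ_s, satisfies d_t(P) = 0 and P does not lie in the image of d_{t+1} : K_{t+1} → K_t; that is, every squarefree monomial in Z_0, …, Z_{n-1} represents a nonzero class in the Koszul homology H_*(𝔪²). -/
set_option maxHeartbeats 1000000
set_option synthInstance.maxHeartbeats 400000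

open scoped TensorProduct
open MvPolynomial

noncomputable section

variable (k : Type) [Field k] (n : ℕ)

/-- The polynomial ring `S = k[x_1,…,x_n]`. -/
abbrev S := MvPolynomial (Fin n) k

/-- The space `S_1` of linear forms. -/
abbrev S1 := homogeneousSubmodule (Fin n) k 1

/-- The space `S_2` of quadratic forms. -/
abbrev S2 := homogeneousSubmodule (Fin n) k 2

/-- The ambient algebra `S ⊗ Λ(S_2)` containing all terms `K_t = S ⊗ ⋀^t S_2`
of the Koszul complex `K(𝔪², S)`; the product is `(f ⊗ ω)(g ⊗ η) = fg ⊗ ω∧η`. -/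
abbrev KK := (MvPolynomial (Fin n) k) ⊗[k] ExteriorAlgebra k (S2 k n)

variable {k n}

/-- The product of two linear forms, as an element of `S_2`. -/
def mulW (a b : S1 k n) : S2 k n :=
  ⟨(a : S k n) * (b : S k n), by
    rw [mem_homogeneousSubmodule]
    have ha := (mem_homogeneousSubmodule 1 (a : S k n)).1 a.2
    have hb := (mem_homogeneousSubmodule 1 (b : S k n)).1 b.2
    simpa using ha.mul hb⟩

/-- The variable `x_i`, as an element of `S_1`. -/
def xv (i : Fin n) : S1 k n :=
  ⟨X i, by rw [mem_homogeneousSubmodule]; exact isHomogeneous_X _ _⟩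

/-- The quadratic monomial `x_i x_j`, as an element of `S_2`. -/
def q (i j : Fin n) : S2 k n := mulW (xv i) (xv j)

variable (k n)

/-- `K_t = S ⊗ ⋀^t S_2`, as a subspace of the ambient algebra `KK`. -/
def Kt (t : ℕ) : Submodule k (KK k n) :=
  LinearMap.range (TensorProduct.map (LinearMap.id : S k n →ₗ[k] S k n)
    (Submodule.subtype (⋀[k]^t (S2 k n))))

variable {k n}

/-- The family of Koszul differentials, encoded as linear endomorphisms of the
ambient space `KK`: `D t` restricted to `K_t` is the `t`-th Koszul differential
`d_t : K_t → K_{t-1}`, i.e. `d_0 = 0` and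
`d_t(f ⊗ m_1 ∧ ⋯ ∧ m_t) = Σ_j (-1)^{j-1} (f·m_j) ⊗ m_1 ∧ ⋯ ∧ m̂_j ∧ ⋯ ∧ m_t`. -/
def IsKoszulDiff (D : ℕ → KK k n →ₗ[k] KK k n) : Prop :=
  D 0 = 0 ∧
  ∀ (t : ℕ) (f : S k n) (m : Fin (t+1) → S2 k n),
    D (t+1) (f ⊗ₜ[k] (ExteriorAlgebra.ιMulti k (t+1) m : ExteriorAlgebra k (S2 k n)))
      = ∑ j : Fin (t+1), ((-1:ℤ)^(j:ℕ)) •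
          ((f * ((m j : S k n))) ⊗ₜ[k]
            (ExteriorAlgebra.ιMulti k t (fun l => m (j.succAbove l)) : ExteriorAlgebra k (S2 k n)))

/-- The cycle `z_{a,b} = Σ_{σ ∈ 𝔖_{t+1}} sgn(σ) a_{σ(t+1)} ⊗ (b_1 a_{σ(1)} ∧ ⋯ ∧ b_t a_{σ(t)})`. -/
def zel (t : ℕ) (a : Fin (t+1) → S1 k n) (b : Fin t → S1 k n) : KK k n :=
  ∑ σ : Equiv.Perm (Fin (t+1)),
    ((Equiv.Perm.sign σ : ℤ)) •
      (((a (σ (Fin.last t)) : S k n)) ⊗ₜ[k]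
        (ExteriorAlgebra.ιMulti k t (fun j => mulW (b j) (a (σ j.castSucc))) :
          ExteriorAlgebra k (S2 k n)))

/-- The cycle `Z_i` (0-indexed: `Zel i` is the paper's `Z_i` for `0 ≤ i ≤ n-1`), namely
`Z_i = Σ_{j=0}^{i} (-1)^{j} x_j ⊗ (x_0 x_i ∧ ⋯ ∧ x̂_j x_i ∧ ⋯ ∧ x_{i-1} x_i ∧ x_i²)`. -/
def Zel (i : Fin n) : KK k n :=
  ∑ j : Fin ((i:ℕ)+1),
    ((-1:ℤ)^(j:ℕ)) •
      ((X (Fin.castLE i.isLt j) : S k n) ⊗ₜ[k]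
        (ExteriorAlgebra.ιMulti k (i:ℕ)
          (fun l : Fin (i:ℕ) => q (Fin.castLE i.isLt (j.succAbove l)) i) :
            ExteriorAlgebra k (S2 k n)))


lemma Kt_eq_span (t : ℕ) : Kt k n t = Submodule.span k
    (Set.range (fun p : S k n × (Fin t → S2 k n) =>
      (p.1 ⊗ₜ[k] (ExteriorAlgebra.ιMulti k t p.2 : ExteriorAlgebra k (S2 k n)) : KK k n))) := by
  apply le_antisymm
  · rintro _ ⟨y, rfl⟩
    induction y using TensorProduct.induction_on with
    | zero => simp
    | add x y hx hy => rw [map_add]; exact add_mem hx hy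
    | tmul f w =>
      obtain ⟨w, hw⟩ := w
      rw [TensorProduct.map_tmul]
      simp only [LinearMap.id_coe, id_eq, Submodule.subtype_apply]
      rw [← ExteriorAlgebra.ιMulti_span_fixedDegree] at hw
      induction hw using Submodule.span_induction with
      | mem x hx => obtain ⟨m, rfl⟩ := hx; exact Submodule.subset_span ⟨(f, m), rfl⟩
      | zero => simp
      | add x y _ _ hx hy => rw [TensorProduct.tmul_add]; exact add_mem hx hy
      | smul c x _ hx => rw [TensorProduct.tmul_smul]; exact Submodule.smul_mem _ _ hx
  · rw [Submodule.span_le]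
    rintro _ ⟨⟨f, m⟩, rfl⟩
    exact ⟨f ⊗ₜ ⟨ExteriorAlgebra.ιMulti k t m,
      ExteriorAlgebra.ιMulti_range k t ⟨m, rfl⟩⟩, by simp⟩

lemma tmul_mem_Kt (t : ℕ) (f : S k n) (m : Fin t → S2 k n) :
    (f ⊗ₜ[k] (ExteriorAlgebra.ιMulti k t m : ExteriorAlgebra k (S2 k n)) : KK k n) ∈ Kt k n t := by
  rw [Kt_eq_span]; exact Submodule.subset_span ⟨(f, m), rfl⟩

lemma Kt_induction {t : ℕ} {p : (x : KK k n) → x ∈ Kt k n t → Prop}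
    (h : ∀ f m, p (f ⊗ₜ[k] (ExteriorAlgebra.ιMulti k t m : ExteriorAlgebra k (S2 k n)))
      (tmul_mem_Kt t f m))
    (h0 : p 0 (zero_mem _))
    (ha : ∀ x y (hx : x ∈ Kt k n t) (hy : y ∈ Kt k n t), p x hx → p y hy →
      p (x + y) (add_mem hx hy))
    (hs : ∀ (c : k) x (hx : x ∈ Kt k n t), p x hx → p (c • x) (Submodule.smul_mem _ c hx))
    {x} (hx : x ∈ Kt k n t) : p x hx := by
  have hx' := hx
  rw [Kt_eq_span] at hx'
  suffices ∃ h : x ∈ Kt k n t, p x h from this.2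
  clear hx
  induction hx' using Submodule.span_induction with
  | mem x hx => obtain ⟨m, rfl⟩ := hx; exact ⟨_, h _ _⟩
  | zero => exact ⟨_, h0⟩
  | add x y h1 h2 hx hy => exact ⟨_, ha _ _ hx.1 hy.1 hx.2 hy.2⟩
  | smul c x h1 hx => exact ⟨_, hs _ _ hx.1 hx.2⟩

lemma mul_mem_Kt {a b : ℕ} {u v : KK k n} (hu : u ∈ Kt k n a) (hv : v ∈ Kt k n b) :
    u * v ∈ Kt k n (a + b) := by
  induction hu using Kt_induction with
  | h f m =>
    induction hv using Kt_induction with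
    | h g l =>
      rw [Algebra.TensorProduct.tmul_mul_tmul, ExteriorAlgebra.ιMulti_mul_ιMulti]
      exact tmul_mem_Kt _ _ _
    | h0 => simp
    | ha x y _ _ hx hy => rw [mul_add]; exact add_mem hx hy
    | hs c x _ hx => rw [mul_smul_comm]; exact Submodule.smul_mem _ _ hx
  | h0 => simp
  | ha x y _ _ hx hy => rw [add_mul]; exact add_mem hx hy
  | hs c x _ hx => rw [smul_mul_assoc]; exact Submodule.smul_mem _ _ hx

lemma D_mem {D : ℕ → KK k n →ₗ[k] KK k n} (hD : IsKoszulDiff D) {t : ℕ} {u : KK k n}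
    (hu : u ∈ Kt k n (t+1)) : D (t+1) u ∈ Kt k n t := by
  induction hu using Kt_induction with
  | h f m =>
    rw [hD.2]
    refine sum_mem fun j _ => zsmul_mem (tmul_mem_Kt _ _ _) _
  | h0 => simp
  | ha x y _ _ hx hy => rw [map_add]; exact add_mem hx hy
  | hs c x _ hx => rw [map_smul]; exact Submodule.smul_mem _ _ hx

lemma D_smulS {D : ℕ → KK k n →ₗ[k] KK k n} (hD : IsKoszulDiff D) {t : ℕ} {u : KK k n}
    (g : S k n) (hu : u ∈ Kt k n t) : D t ((g ⊗ₜ 1) * u) = (g ⊗ₜ 1) * D t u := by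
  cases t with
  | zero => simp [hD.1]
  | succ t =>
  induction hu using Kt_induction with
  | h f m =>
    rw [Algebra.TensorProduct.tmul_mul_tmul, one_mul, hD.2, hD.2, Finset.mul_sum]
    refine Finset.sum_congr rfl fun j _ => ?_
    rw [mul_smul_comm, Algebra.TensorProduct.tmul_mul_tmul, one_mul, mul_assoc]
  | h0 => simp
  | ha x y _ _ hx hy => rw [mul_add, map_add, map_add, mul_add, hx, hy]
  | hs c x _ hx => rw [mul_smul_comm, map_smul, map_smul, mul_smul_comm, hx]

lemma D_iota {D : ℕ → KK k n →ₗ[k] KK k n} (hD : IsKoszulDiff D) {t : ℕ} {u : KK k n}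
    (m : S2 k n) (hu : u ∈ Kt k n t) :
    D (t+1) ((1 ⊗ₜ ExteriorAlgebra.ι k m) * u)
      = ((m : S k n) ⊗ₜ 1) * u - (1 ⊗ₜ ExteriorAlgebra.ι k m) * D t u := by
  induction hu using Kt_induction with
  | h f v =>
    have key : ((1 : S k n) ⊗ₜ[k] ExteriorAlgebra.ι k m) *
        (f ⊗ₜ[k] (ExteriorAlgebra.ιMulti k t v : ExteriorAlgebra k (S2 k n))) =
        f ⊗ₜ[k] (ExteriorAlgebra.ιMulti k (t+1) (Fin.cons m v : Fin (t+1) → S2 k n)) := by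
      rw [Algebra.TensorProduct.tmul_mul_tmul, one_mul, ExteriorAlgebra.ιMulti_succ_apply]
      rfl
    rw [key, hD.2, Fin.sum_univ_succ, sub_eq_add_neg]
    congr 1
    · simp [mul_comm]
    · cases t with
      | zero => simp [hD.1]
      | succ t =>
        rw [hD.2, Finset.mul_sum, ← Finset.sum_neg_distrib]
        refine Finset.sum_congr rfl fun j _ => ?_
        rw [mul_smul_comm, Algebra.TensorProduct.tmul_mul_tmul, one_mul, Fin.cons_succ,
          Fin.val_succ, pow_succ, mul_neg_one, neg_smul, ExteriorAlgebra.ιMulti_succ_apply]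
        congr 3
        congr 2
        ext l : 1
        simp [Matrix.vecTail]
  | h0 => simp
  | ha x y _ _ hx hy => rw [mul_add, map_add, map_add, mul_add, mul_add, hx, hy]; abel
  | hs c x _ hx =>
    rw [mul_smul_comm, map_smul, map_smul, mul_smul_comm, mul_smul_comm, hx, smul_sub]

lemma iota_mul (t : ℕ) (f : S k n) (m : Fin (t+1) → S2 k n) :
    (f ⊗ₜ[k] (ExteriorAlgebra.ιMulti k (t+1) m : ExteriorAlgebra k (S2 k n)) : KK k n) =
    (1 ⊗ₜ ExteriorAlgebra.ι k (m 0)) *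
      (f ⊗ₜ[k] (ExteriorAlgebra.ιMulti k t (Matrix.vecTail m) : ExteriorAlgebra k (S2 k n))) := by
  rw [Algebra.TensorProduct.tmul_mul_tmul, one_mul, ExteriorAlgebra.ιMulti_succ_apply]

lemma D_mul {D : ℕ → KK k n →ₗ[k] KK k n} (hD : IsKoszulDiff D) {a b : ℕ} {u v : KK k n}
    (hu : u ∈ Kt k n a) (hv : v ∈ Kt k n b) :
    D (a+b) (u * v) = D a u * v + (-1 : ℤ)^a • (u * D b v) := by
  induction hu using Kt_induction with
  | h f m =>
    induction a with
    | zero =>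
      rw [hD.1, ExteriorAlgebra.ιMulti_zero_apply, zero_add, D_smulS hD _ hv]
      simp
    | succ a ih =>
      have h1 := tmul_mem_Kt a f (Matrix.vecTail m)
      rw [iota_mul, Nat.succ_add, mul_assoc, D_iota hD _ (mul_mem_Kt h1 hv), D_iota hD _ h1, ih,
        pow_succ, mul_neg_one, neg_smul, mul_add, sub_mul, mul_smul_comm]
      simp only [mul_assoc]
      abel
  | h0 => simp
  | ha x y _ _ hx hy => simp only [add_mul, map_add, hx, hy, smul_add]; abel
  | hs c x _ hx =>
    simp only [smul_mul_assoc, map_smul, hx, smul_add]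
    rw [smul_comm]

lemma D_D {D : ℕ → KK k n →ₗ[k] KK k n} (hD : IsKoszulDiff D) {t : ℕ} {u : KK k n}
    (hu : u ∈ Kt k n (t+1)) : D t (D (t+1) u) = 0 := by
  induction t generalizing u with
  | zero => simp [hD.1]
  | succ t ih =>
  induction hu using Kt_induction with
  | h f m =>
    have h1 := tmul_mem_Kt (t+1) f (Matrix.vecTail m)
    rw [iota_mul, D_iota hD _ h1, map_sub, D_smulS hD _ h1, D_iota hD _ (D_mem hD h1), ih h1]
    simp
  | h0 => simp
  | ha x y _ _ hx hy => simp only [map_add, hx, hy, add_zero]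
  | hs c x _ hx => simp only [map_smul, hx, smul_zero]

lemma Zel_mem (i : Fin n) : (Zel i : KK k n) ∈ Kt k n (i : ℕ) :=
  sum_mem fun _ _ => zsmul_mem (tmul_mem_Kt _ _ _) _

lemma X_mul_inj (i : Fin n) (u : KK k n) (h : ((X i : S k n) ⊗ₜ[k] 1 : KK k n) * u = 0) : u = 0 := by
  have h1 : Function.Injective (LinearMap.mulLeft k (X i : S k n)) :=
    fun a b hab => mul_left_cancel₀ (X_ne_zero i) hab
  have h2 := Module.Flat.rTensor_preserves_injective_linearMap
    (M := ExteriorAlgebra k (S2 k n)) _ h1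
  apply h2
  rw [map_zero, ← h]
  clear h
  induction u using TensorProduct.induction_on with
  | zero => simp
  | add x y hx hy => rw [map_add, mul_add, hx, hy]
  | tmul f w => simp

lemma D_Zel {D : ℕ → KK k n →ₗ[k] KK k n} (hD : IsKoszulDiff D) (i : Fin n) :
    D (i : ℕ) (Zel i) = 0 := by
  apply X_mul_inj i
  rw [← D_smulS hD _ (Zel_mem i)]
  have h := D_D hD (tmul_mem_Kt ((i : ℕ)+1) 1 (fun j => q (k := k) (Fin.castLE i.isLt j) i))
  rw [hD.2] at h
  rw [← h, Zel, Finset.mul_sum]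
  congr 1
  refine Finset.sum_congr rfl fun j _ => ?_
  rw [mul_smul_comm, Algebra.TensorProduct.tmul_mul_tmul, one_mul, one_mul]
  simp [q, mulW, xv, mul_comm]

lemma prod_cycle {D : ℕ → KK k n →ₗ[k] KK k n} (hD : IsKoszulDiff D) (M : List (Fin n)) :
    (M.map (fun i => (Zel i : KK k n))).prod ∈ Kt k n (M.map (fun i : Fin n => (i : ℕ))).sum ∧
    D (M.map (fun i : Fin n => (i : ℕ))).sum (M.map (fun i => (Zel i : KK k n))).prod = 0 := by
  induction M with
  | nil =>
    refine ⟨?_, by simp [hD.1]⟩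
    have := tmul_mem_Kt (k := k) (n := n) 0 1 (fun i => i.elim0)
    simpa [Algebra.TensorProduct.one_def] using this
  | cons i M ih =>
    simp only [List.map_cons, List.prod_cons, List.sum_cons]
    exact ⟨mul_mem_Kt (Zel_mem i) ih.1, by rw [D_mul hD (Zel_mem i) ih.1, ih.2, D_Zel hD]; simp⟩

variable (k n) in
/-- squarefree coordinates of a quadratic form. -/
def pW : S2 k n →ₗ[k] (Fin n × Fin n → k) :=
  LinearMap.pi fun p => if p.1 < p.2 then
    (lcoeff k (Finsupp.single p.1 1 + Finsupp.single p.2 1)) ∘ₗ (S2 k n).subtype else 0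

lemma pW_apply (m : S2 k n) (a b : Fin n) (h : a < b) :
    pW k n m (a, b) = coeff (Finsupp.single a 1 + Finsupp.single b 1) (m : S k n) := by
  simp [pW, h]

lemma q_coe (a b : Fin n) : ((q a b : S2 k n) : S k n) =
    monomial (Finsupp.single a 1 + Finsupp.single b 1) 1 := by
  simp [q, mulW, xv, X, monomial_mul]

lemma pair_eq {a b c d : Fin n} (hcd : c < d)
    (h : (Finsupp.single a 1 + Finsupp.single b 1 : Fin n →₀ ℕ)
      = Finsupp.single c 1 + Finsupp.single d 1) : (a = c ∧ b = d) ∨ (a = d ∧ b = c) := by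
  have h1 := DFunLike.congr_fun h a
  have h2 := DFunLike.congr_fun h b
  have h3 := DFunLike.congr_fun h c
  have h4 := DFunLike.congr_fun h d
  simp only [Finsupp.add_apply, Finsupp.single_apply] at h1 h2 h3 h4
  grind

lemma pW_q (a b : Fin n) (h : a < b) : pW k n (q a b) = Pi.single (a, b) 1 := by
  ext ⟨c, d⟩
  by_cases hcd : c < d
  · rw [pW_apply _ _ _ hcd, q_coe, coeff_monomial, Pi.single_apply]
    congr 1
    simp only [Prod.mk.injEq, eq_iff_iff]
    constructor
    · intro h'
      have := pair_eq hcd h'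
      grind
    · rintro ⟨rfl, rfl⟩; rfl
  · have : (c, d) ≠ (a, b) := by rintro ⟨⟩; exact hcd h
    simp [pW, hcd, this]

lemma pW_q_self (a : Fin n) : pW k n (q a a) = 0 := by
  ext ⟨c, d⟩
  by_cases hcd : c < d
  · rw [pW_apply _ _ _ hcd, q_coe, coeff_monomial, if_neg]
    · rfl
    · intro h'
      have := pair_eq hcd h'
      grind
  · simp [pW, hcd]

variable (k n) in
/-- target algebra -/
abbrev KW := (MvPolynomial (Fin n) k) ⊗[k] ExteriorAlgebra k (Fin n × Fin n → k)

variable (k n) in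
/-- induced algebra map -/
def Psi : KK k n →ₐ[k] KW k n :=
  Algebra.TensorProduct.map (AlgHom.id k _) (ExteriorAlgebra.map (pW k n))

/-- pairs for `i` -/
def Lp (i : Fin n) : List (Fin n × Fin n) :=
  List.ofFn (fun j : Fin (i : ℕ) => (Fin.castLE i.isLt.le j, i))

variable (k) in
/-- wedge of basis vectors -/
def Wd (L : List (Fin n × Fin n)) : ExteriorAlgebra k (Fin n × Fin n → k) :=
  (L.map (fun p => ExteriorAlgebra.ι k (Pi.single p (1 : k)))).prod

lemma Psi_Zel (i : Fin n) : Psi k n (Zel i) =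
    ((-1 : ℤ)^(i : ℕ)) • ((X i : S k n) ⊗ₜ[k] Wd k (Lp i)) := by
  rw [Zel, map_sum, Finset.sum_eq_single (Fin.last (i : ℕ))]
  · rw [map_zsmul, Psi, Algebra.TensorProduct.map_tmul, ExteriorAlgebra.map_apply_ιMulti]
    simp only [Fin.val_last, AlgHom.coe_id, id_eq]
    congr 2
    rw [Wd, Lp, List.map_ofFn, ExteriorAlgebra.ιMulti_apply]
    congr 2
    ext1 l
    simp only [Function.comp_apply, Fin.succAbove_last]
    rw [pW_q]
    · rfl
    · rw [Fin.lt_def]; simp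
  · intro j _ hj
    rw [map_zsmul, Psi, Algebra.TensorProduct.map_tmul, ExteriorAlgebra.map_apply_ιMulti]
    obtain ⟨l, hl⟩ := Fin.exists_succAbove_eq (Ne.symm hj)
    rw [AlternatingMap.map_coord_zero _ l]
    · simp
    · simp only [Function.comp_apply, hl]
      have : Fin.castLE i.isLt (Fin.last (i : ℕ)) = i := by ext; simp
      rw [this, pW_q_self]
  · simp

lemma Psi_prod (M : List (Fin n)) : Psi k n (M.map (fun i => (Zel i : KK k n))).prod =
    ((-1 : ℤ)^(M.map (fun i : Fin n => (i : ℕ))).sum) •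
      ((M.map (fun i => (X i : S k n))).prod ⊗ₜ[k] Wd k (M.flatMap Lp)) := by
  induction M with
  | nil =>
    simp only [List.map_nil, List.prod_nil, map_one]
    simp [Wd, ← Algebra.TensorProduct.one_def]
  | cons i M ih =>
    simp only [List.map_cons, List.prod_cons, List.sum_cons, map_mul, ih, Psi_Zel,
      List.flatMap_cons]
    rw [smul_mul_smul_comm, Algebra.TensorProduct.tmul_mul_tmul, pow_add]
    simp [Wd]

variable (k) in
/-- determinant functional -/
def detF {t : ℕ} (T : Fin t → Fin n × Fin n) :
    ExteriorAlgebra k (Fin n × Fin n → k) →ₗ[k] k :=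
  ExteriorAlgebra.liftAlternating (Pi.single t
    ((Matrix.detRowAlternating (n := Fin t) (R := k)).compLinearMap (LinearMap.funLeft k k T)))

lemma detF_apply {t : ℕ} (T : Fin t → Fin n × Fin n) (v : Fin t → (Fin n × Fin n → k)) :
    detF k T (ExteriorAlgebra.ιMulti k t v) = Matrix.det (Matrix.of fun a b => v a (T b)) := by
  rw [detF, ExteriorAlgebra.liftAlternating_apply_ιMulti, Pi.single_eq_same]
  rfl

lemma detF_Wd (L : List (Fin n × Fin n)) (hL : L.Nodup) : detF k L.get (Wd k L) = 1 := by
  have : Wd k L = ExteriorAlgebra.ιMulti k L.length (fun a => Pi.single (L.get a) (1 : k)) := by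
    rw [ExteriorAlgebra.ιMulti_apply, Wd]
    congr 1
    conv_lhs => rw [← List.ofFn_get L, List.map_ofFn]
    rfl
  rw [this, detF_apply]
  convert Matrix.det_one (n := Fin L.length) (R := k)
  ext a b
  simp only [Matrix.of_apply, Pi.single_apply, Matrix.one_apply]
  congr 1
  rw [eq_iff_iff, hL.injective_get.eq_iff, eq_comm]

variable (k) in
/-- The coefficient functional. -/
def FF {t : ℕ} (e : Fin n →₀ ℕ) (T : Fin t → Fin n × Fin n) : KW k n →ₗ[k] k :=
  LinearMap.mul' k k ∘ₗ TensorProduct.map (lcoeff k e) (detF k T)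

lemma FF_tmul {t : ℕ} (e : Fin n →₀ ℕ) (T : Fin t → Fin n × Fin n) (f : S k n) (w) :
    FF k e T (f ⊗ₜ w) = coeff e f * detF k T w := by
  simp [FF]

lemma FF_D {D : ℕ → KK k n →ₗ[k] KK k n} (hD : IsKoszulDiff D) {t : ℕ} (e : Fin n →₀ ℕ)
    (T : Fin t → Fin n × Fin n)
    (hT : ∀ b : Fin n →₀ ℕ, b ≤ e → (∀ m : S2 k n, coeff b (m : S k n) = 0) ∨
      ∃ a, ∀ m : S2 k n, coeff b (m : S k n) = pW k n m (T a))
    {u : KK k n} (hu : u ∈ Kt k n (t+1)) : FF k e T (Psi k n (D (t+1) u)) = 0 := by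
  induction hu using Kt_induction with
  | h f m =>
    have h1 : FF k e T (Psi k n (D (t+1) (f ⊗ₜ[k] ExteriorAlgebra.ιMulti k (t+1) m))) =
      ∑ x ∈ Finset.HasAntidiagonal.antidiagonal e, coeff x.1 f * ∑ j : Fin (t+1), (-1)^(j : ℕ) *
        coeff x.2 (m j : S k n) * Matrix.det (Matrix.of fun (a : Fin t) b =>
          pW k n (m (j.succAbove a)) (T b)) := by
      rw [hD.2, map_sum, map_sum]
      simp_rw [Finset.mul_sum]
      rw [Finset.sum_comm]
      refine Finset.sum_congr rfl fun j _ => ?_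
      rw [map_zsmul, map_zsmul, Psi, Algebra.TensorProduct.map_tmul,
        ExteriorAlgebra.map_apply_ιMulti, FF_tmul, detF_apply]
      simp only [AlgHom.coe_id, id_eq, coeff_mul, zsmul_eq_mul, Finset.sum_mul, Finset.mul_sum]
      refine Finset.sum_congr rfl fun x _ => ?_
      push_cast
      simp only [Function.comp_apply]
      ring
    rw [h1]
    refine Finset.sum_eq_zero fun x hx => ?_
    have hx2 : x.2 ≤ e := by
      rw [← Finset.HasAntidiagonal.mem_antidiagonal.1 hx]; exact le_add_self
    rcases hT x.2 hx2 with h0 | ⟨a, ha⟩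
    · simp [h0]
    · simp only [ha]
      have h2 := Matrix.det_succ_column_zero (Matrix.of fun (i : Fin (t+1)) (c : Fin (t+1)) =>
        (Fin.cons (pW k n (m i) (T a)) (fun b => pW k n (m i) (T b)) : Fin (t+1) → k) c)
      rw [Matrix.det_zero_of_column_eq (Fin.succ_ne_zero a).symm (by intro i; simp)] at h2
      convert mul_zero _
      exact h2.symm
  | h0 => simp
  | ha x y _ _ hx hy => simp only [map_add, hx, hy, add_zero]
  | hs c x _ hx => simp only [map_smul, hx, smul_zero]

lemma mem_Lp {i : Fin n} {p : Fin n × Fin n} : p ∈ Lp i ↔ p.1 < p.2 ∧ p.2 = i := by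
  obtain ⟨a, b⟩ := p
  simp only [Lp, List.mem_ofFn, Prod.mk.injEq]
  constructor
  · rintro ⟨j, rfl, rfl⟩
    exact ⟨by rw [Fin.lt_def]; simp, rfl⟩
  · rintro ⟨h, rfl⟩
    exact ⟨⟨a, h⟩, by ext; simp, rfl⟩

lemma prod_X (M : List (Fin n)) : (M.map (fun i => (X i : S k n))).prod =
    monomial (Multiset.toFinsupp (M : Multiset (Fin n))) 1 := by
  induction M with
  | nil => simp
  | cons i M ih =>
    rw [List.map_cons, List.prod_cons, ih, ← Multiset.cons_coe, ← Multiset.singleton_add, map_add,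
      Multiset.toFinsupp_singleton, X, monomial_mul, one_mul]

lemma prod_not_boundary {D : ℕ → KK k n →ₗ[k] KK k n} (hD : IsKoszulDiff D) (M : List (Fin n))
    (hM : M.Nodup) (t : ℕ) (ht : (M.map (fun i : Fin n => (i : ℕ))).sum = t) :
    (M.map (fun i => (Zel i : KK k n))).prod ∉ Submodule.map (D (t+1)) (Kt k n (t+1)) := by
  rintro ⟨u, hu, hP⟩
  have hlen : t = (M.flatMap Lp).length := by
    rw [List.length_flatMap, ← ht]
    congr 2
    ext i
    simp [Lp]
  subst hlen
  have hnd : (M.flatMap Lp).Nodup := by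
    rw [List.nodup_flatMap]
    refine ⟨fun i _ => ?_, ?_⟩
    · rw [Lp, List.nodup_ofFn]
      intro a b hab
      simpa using hab
    · refine hM.imp ?_
      intro a b hab x hx hy
      rw [mem_Lp] at hx hy
      exact hab (hx.2.symm.trans hy.2)
  have h1 := FF_D hD (Multiset.toFinsupp (M : Multiset (Fin n))) (M.flatMap Lp).get ?_ hu
  · rw [hP, Psi_prod, map_zsmul, FF_tmul, detF_Wd _ hnd, prod_X, coeff_monomial, if_pos rfl] at h1
    simp at h1
  · intro b hb
    by_cases hdeg : b.degree = 2
    · right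
      have hcard : (Finsupp.toMultiset b).card = 2 := by
        rw [Finsupp.card_toMultiset, ← hdeg]; rfl
      obtain ⟨x, y, hxy⟩ := Multiset.card_eq_two.1 hcard
      have hb2 : b = Finsupp.single x 1 + Finsupp.single y 1 := by
        rw [← Finsupp.toMultiset_toFinsupp b, hxy]
        rw [Multiset.insert_eq_cons, ← Multiset.singleton_add, map_add]
        simp
      have hle : ∀ z, b z ≤ M.count z := fun z => by simpa using hb z
      have hne : x ≠ y := by
        rintro rfl
        have := (hle x).trans (List.nodup_iff_count_le_one.1 hM x)
        simp [hb2] at this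
      have hxM : x ∈ M := by
        rw [← List.count_pos_iff]
        refine lt_of_lt_of_le ?_ (hle x)
        simp [hb2]
      have hyM : y ∈ M := by
        rw [← List.count_pos_iff]
        refine lt_of_lt_of_le ?_ (hle y)
        simp [hb2]
      have fin : ∀ x y : Fin n, x < y → y ∈ M → b = Finsupp.single x 1 + Finsupp.single y 1 →
          ∃ a, ∀ m : S2 k n, coeff b (m : S k n) = pW k n m ((M.flatMap Lp).get a) := by
        intro x y hlt hy hb2
        have : (x, y) ∈ M.flatMap Lp := List.mem_flatMap.2 ⟨y, hy, mem_Lp.2 ⟨hlt, rfl⟩⟩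
        obtain ⟨a, ha⟩ := List.get_of_mem this
        exact ⟨a, fun m => by rw [ha, pW_apply _ _ _ hlt, hb2]⟩
      rcases lt_or_gt_of_ne hne with h | h
      · exact fin x y h hyM hb2
      · exact fin y x h hxM (by rw [hb2, add_comm])
    · left
      intro m
      exact ((mem_homogeneousSubmodule 2 _).1 m.2).coeff_eq_zero hdeg

/-- For every strictly increasing sequence `0 ≤ μ_1 < ⋯ < μ_s ≤ n-1`,
the squarefree product `P = Z_{μ_1} ⋯ Z_{μ_s} ∈ K_t`, `t = μ_1 + ⋯ + μ_s`, satisfies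
`d_t(P) = 0` and `P` is not in the image of `d_{t+1} : K_{t+1} → K_t`; i.e. every
squarefree monomial in `Z_0, …, Z_{n-1}` represents a nonzero Koszul homology class. -/
theorem squarefree_product_nonzero_class (k : Type) [Field k] [CharZero k] (n : ℕ)
    (s : ℕ) (μ : Fin s → Fin n) (hμ : StrictMono μ)
    (D : ℕ → KK k n →ₗ[k] KK k n) (hD : IsKoszulDiff D) :
    (((List.finRange s).map (fun l => (Zel (μ l) : KK k n))).prod ∈
        Kt k n (∑ l, (μ l : ℕ))) ∧
      D (∑ l, (μ l : ℕ)) (((List.finRange s).map (fun l => (Zel (μ l) : KK k n))).prod) = 0 ∧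
      ((List.finRange s).map (fun l => (Zel (μ l) : KK k n))).prod ∉
        Submodule.map (D ((∑ l, (μ l : ℕ)) + 1)) (Kt k n ((∑ l, (μ l : ℕ)) + 1)) := by
  have hmap : (List.finRange s).map (fun l => (Zel (μ l) : KK k n)) =
      ((List.finRange s).map μ).map (fun i => (Zel i : KK k n)) := by
    rw [List.map_map]; rfl
  have hsum : (((List.finRange s).map μ).map (fun i : Fin n => (i : ℕ))).sum
      = ∑ l, (μ l : ℕ) := by
    rw [List.map_map, ← List.ofFn_eq_map, List.sum_ofFn]; rfl
  rw [hmap]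
  have h := prod_cycle hD ((List.finRange s).map μ)
  rw [hsum] at h
  exact ⟨h.1, h.2, prod_not_boundary hD _ ((List.nodup_finRange s).map hμ.injective) _ hsum⟩

end
end

section
/- For every t ≥ 0 and all sequences a = (a_1, …, a_{t+1}) and b = (b_1, …, b_t) of variables from {x_1, …, x_n} (repetitions allowed), the element z_{a,b} lies in the k-linear span of the elements z_{a',b'} over all semistandard pairs (a', b') of sequences of variables of the same length. -/
set_option maxHeartbeats 1000000
set_option synthInstance.maxHeartbeats 400000

open scoped TensorProduct
open MvPolynomial

noncomputable section

variable (k : Type) [Field k] (n : ℕ)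

variable {k n}

variable (k n)

variable {k n}

/-- A pair of sequences of variables `a = (x_{i_1},…,x_{i_{t+1}})`, `b = (x_{j_1},…,x_{j_t})`
is *semistandard* if `i_1 < ⋯ < i_{t+1}`, `j_1 ≤ ⋯ ≤ j_t` and `i_1 ≤ j_1`. -/
def Semistandard {n t : ℕ} (a : Fin (t+1) → Fin n) (b : Fin t → Fin n) : Prop :=
  StrictMono a ∧ Monotone b ∧ ∀ h : 0 < t, a 0 ≤ b ⟨0, h⟩

def Tz (t : ℕ) (u : Fin (t+1) → S1 k n) (b : Fin t → S1 k n) : KK k n :=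
  ((u (Fin.last t) : S k n)) ⊗ₜ[k]
        (ExteriorAlgebra.ιMulti k t (fun j => mulW (b j) (u j.castSucc)) :
          ExteriorAlgebra k (S2 k n))

theorem zel_eq (t : ℕ) (a : Fin (t+1) → S1 k n) (b : Fin t → S1 k n) :
    zel t a b = ∑ σ : Equiv.Perm (Fin (t+1)),
      ((Equiv.Perm.sign σ : ℤ)) • Tz t (fun l => a (σ l)) b := rfl

theorem mulW_comm (a b : S1 k n) : mulW a b = mulW b a :=
  Subtype.ext (mul_comm _ _)

theorem zel_perm_a (t : ℕ) (a : Fin (t+1) → S1 k n) (b : Fin t → S1 k n)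
    (τ : Equiv.Perm (Fin (t+1))) :
    zel t (fun l => a (τ l)) b = (Equiv.Perm.sign τ : ℤ) • zel t a b := by
  rw [zel_eq, zel_eq, Finset.smul_sum]
  refine Fintype.sum_equiv (Equiv.mulLeft τ) _ _ fun σ => ?_
  rw [smul_smul]
  have : (Equiv.Perm.sign τ : ℤ) * (Equiv.Perm.sign ((Equiv.mulLeft τ) σ) : ℤ)
      = (Equiv.Perm.sign σ : ℤ) := by
    simp [← mul_assoc]
  rw [this]
  rfl

theorem Tz_perm (t : ℕ) (u : Fin (t+1) → S1 k n) (b : Fin t → S1 k n)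
    (τ : Equiv.Perm (Fin t)) :
    Tz t (fun l => u (τ.viaFintypeEmbedding Fin.castSuccEmb l)) (fun l => b (τ l))
      = (Equiv.Perm.sign τ : ℤ) • Tz t u b := by
  unfold Tz
  have h1 : τ.viaFintypeEmbedding Fin.castSuccEmb (Fin.last t) = Fin.last t := by
    apply Equiv.Perm.viaFintypeEmbedding_apply_notMem_range
    rintro ⟨x, hx⟩
    exact Fin.castSucc_ne_last x hx
  have h2 : ∀ j : Fin t, τ.viaFintypeEmbedding Fin.castSuccEmb j.castSucc
      = (τ j).castSucc := fun j =>
    Equiv.Perm.viaFintypeEmbedding_apply_image τ Fin.castSuccEmb j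
  simp only [h1, h2]
  have := AlternatingMap.map_perm (ExteriorAlgebra.ιMulti k t (M := S2 k n))
    (fun j => mulW (b j) (u j.castSucc)) τ
  have e : (fun j => mulW (b (τ j)) (u (τ j).castSucc))
    = (fun j => mulW (b j) (u j.castSucc)) ∘ τ := rfl
  rw [e, this]
  rcases Int.units_eq_one_or (Equiv.Perm.sign τ) with h | h <;> simp [h, TensorProduct.tmul_neg]

theorem zel_perm_b (t : ℕ) (a : Fin (t+1) → S1 k n) (b : Fin t → S1 k n)
    (τ : Equiv.Perm (Fin t)) :
    zel t a (fun l => b (τ l)) = zel t a b := by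
  rw [zel_eq, zel_eq]
  symm
  refine Fintype.sum_equiv
    (Equiv.mulRight (τ.viaFintypeEmbedding Fin.castSuccEmb)) _ _ fun σ => ?_
  have := Tz_perm t (fun l => a (σ l)) b τ
  simp only [Equiv.coe_mulRight, Equiv.Perm.mul_apply]
  rw [this, smul_smul]
  congr 1
  simp [Equiv.Perm.viaFintypeEmbedding_sign, mul_assoc]

theorem self_neg_zero [CharZero k] (x : KK k n) (h : x = -x) : x = 0 := by
  have h2 : (2 : k) • x = 0 := by
    rw [two_smul]; nth_rewrite 1 [h]; simp
  exact (smul_eq_zero.1 h2).resolve_left two_ne_zero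

theorem zel_not_inj [CharZero k] (t : ℕ) (a : Fin (t+1) → S1 k n) (b : Fin t → S1 k n)
    (i j : Fin (t+1)) (hij : i ≠ j) (h : a i = a j) : zel t a b = 0 := by
  apply self_neg_zero
  have := zel_perm_a t a b (Equiv.swap i j)
  rw [Equiv.Perm.sign_swap hij] at this
  have e : (fun l => a (Equiv.swap i j l)) = a := by
    funext l
    rcases eq_or_ne l i with rfl | hi
    · simp [h]
    rcases eq_or_ne l j with rfl | hj
    · simp [h]
    rw [Equiv.swap_apply_of_ne_of_ne hi hj]
  rw [e] at this
  simpa using this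

theorem zel_exchange [CharZero k] (s : ℕ) (a : Fin (s+1+1) → S1 k n) (b : Fin (s+1) → S1 k n) :
    zel (s+1) a b = ∑ l, zel (s+1) (Function.update a l (b 0)) (Function.update b 0 (a l)) := by
  simp only [zel_eq (s+1)]
  rw [Finset.sum_comm]
  have step : ∀ σ : Equiv.Perm (Fin (s+1+1)),
      (∑ l, (Equiv.Perm.sign σ : ℤ) • Tz (s+1) (fun i => Function.update a l (b 0) (σ i))
        (Function.update b 0 (a l)))
      = ∑ m, (Equiv.Perm.sign σ : ℤ) • Tz (s+1) (Function.update (fun i => a (σ i)) m (b 0))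
        (Function.update b 0 (a (σ m))) := by
    intro σ
    symm
    refine Fintype.sum_equiv σ _ _ fun m => ?_
    congr 2
    funext i
    simp only [Function.update_apply, EmbeddingLike.apply_eq_iff_eq]
  rw [Finset.sum_congr rfl fun σ _ => step σ, Finset.sum_comm, Finset.sum_eq_single (0 : Fin (s+1+1))]
  · refine Finset.sum_congr rfl fun σ _ => ?_
    congr 1
    unfold Tz
    congr 2
    funext j
    refine Fin.cases ?_ (fun j => ?_) j
    · simp [mulW_comm]
    · have : (j.succ.castSucc) ≠ 0 := by simp [Fin.ext_iff]
      simp [Function.update_apply, Fin.succ_ne_zero]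
  · intro m _ hm
    apply self_neg_zero
    rw [← Finset.sum_neg_distrib]
    refine Fintype.sum_equiv (Equiv.mulRight (Equiv.swap 0 m)) _ _ fun σ => ?_
    have hs : (Equiv.Perm.sign (Equiv.mulRight (Equiv.swap 0 m) σ) : ℤ)
      = - (Equiv.Perm.sign σ : ℤ) := by
      simp [Equiv.Perm.sign_swap hm.symm]
    rw [hs, neg_smul, neg_neg]
    congr 1
    have hsw : ∀ x, x ≠ 0 → x ≠ m → (Equiv.mulRight (Equiv.swap 0 m) σ) x = σ x := by
      intro x h0 h1
      simp [Equiv.swap_apply_of_ne_of_ne h0 h1]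
    have hs0 : (Equiv.mulRight (Equiv.swap 0 m) σ) 0 = σ m := by simp
    have hsm : (Equiv.mulRight (Equiv.swap 0 m) σ) m = σ 0 := by simp
    generalize (Equiv.mulRight (Equiv.swap 0 m) σ) = ρ at *
    have key : ∀ x, x ≠ 0 → Function.update (fun i => a (σ i)) m (b 0) x
        = Function.update (fun i => a (ρ i)) m (b 0) x := by
      intro x hx
      rcases eq_or_ne x m with rfl | h
      · simp
      · simp [h, hsw x hx h]
    unfold Tz
    rw [key _ (by simp [Fin.ext_iff])]
    congr 2
    funext j
    refine Fin.cases ?_ (fun j => ?_) j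
    · simp [Function.update_of_ne hm.symm, hs0, hsm, mulW_comm]
    · rw [key _ (by simp [Fin.ext_iff])]
      simp [Function.update_apply, Fin.succ_ne_zero]
  · simp

theorem zel_mem_of_min [CharZero k] (t : ℕ) (a : Fin (t+1) → Fin n) (b : Fin t → Fin n)
    (l0 : Fin (t+1)) (h : ∀ j, a l0 ≤ b j) :
    (zel t (fun l => (xv (a l) : S1 k n)) (fun l => xv (b l)) : KK k n) ∈
      Submodule.span k {w : KK k n |
        ∃ (a' : Fin (t+1) → Fin n) (b' : Fin t → Fin n), Semistandard a' b' ∧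
          w = zel t (fun l => (xv (a' l) : S1 k n)) (fun l => xv (b' l))} := by
  by_cases hinj : Function.Injective a
  · have h1 := zel_perm_b t (fun l => (xv (a l) : S1 k n)) (fun l => xv (b l)) (Tuple.sort b)
    have h2 := zel_perm_a t (fun l => (xv (a l) : S1 k n)) (fun l => xv (b (Tuple.sort b l)))
      (Tuple.sort a)
    rw [h1] at h2
    have hm : zel t (fun l => (xv (a (Tuple.sort a l)) : S1 k n))
        (fun l => xv (b (Tuple.sort b l))) ∈ Submodule.span k {w : KK k n |
        ∃ (a' : Fin (t+1) → Fin n) (b' : Fin t → Fin n), Semistandard a' b' ∧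
          w = zel t (fun l => (xv (a' l) : S1 k n)) (fun l => xv (b' l))} := by
      apply Submodule.subset_span
      refine ⟨_, _, ⟨(Tuple.monotone_sort a).strictMono_of_injective
        (hinj.comp (Tuple.sort a).injective), Tuple.monotone_sort b, fun ht => ?_⟩, rfl⟩
      have := Tuple.monotone_sort a (Fin.zero_le ((Tuple.sort a).symm l0))
      simp only [Function.comp_apply, Equiv.apply_symm_apply] at this
      exact this.trans (h _)
    rw [h2] at hm
    rcases Int.units_eq_one_or (Equiv.Perm.sign (Tuple.sort a)) with h | h
    · simpa [h] using hm
    · simpa [h] using hm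
  · simp only [Function.Injective, not_forall] at hinj
    obtain ⟨i, j, hij, hne⟩ := hinj
    rw [zel_not_inj t _ _ i j hne (by simp [hij])]
    exact Submodule.zero_mem _

/-- For every `t ≥ 0` and all sequences `a`, `b` of variables (repetitions
allowed), the element `z_{a,b}` lies in the `k`-linear span of the elements `z_{a',b'}` over
all semistandard pairs `(a',b')` of sequences of variables of the same length. -/
theorem zel_in_span_semistandard (k : Type) [Field k] [CharZero k] (n : ℕ)
    (t : ℕ) (a : Fin (t+1) → Fin n) (b : Fin t → Fin n) :
    (zel t (fun l => (xv (a l) : S1 k n)) (fun l => xv (b l)) : KK k n) ∈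
      Submodule.span k {w : KK k n |
        ∃ (a' : Fin (t+1) → Fin n) (b' : Fin t → Fin n), Semistandard a' b' ∧
          w = zel t (fun l => (xv (a' l) : S1 k n)) (fun l => xv (b' l))} := by
  have hb := zel_perm_b t (fun l => (xv (a l) : S1 k n)) (fun l => xv (b l)) (Tuple.sort b)
  rw [← hb]
  have hmono : Monotone (fun l => b (Tuple.sort b l)) := Tuple.monotone_sort b
  clear hb
  generalize hb' : (fun l => b (Tuple.sort b l)) = b' at hmono
  have hx : (fun l => (xv (b (Tuple.sort b l)) : S1 k n)) = fun l => xv (b' l) := by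
    subst hb'; rfl
  rw [hx]
  clear hx hb'
  cases t with
  | zero => exact zel_mem_of_min 0 a b' 0 (fun j => j.elim0)
  | succ s =>
    by_cases hc : ∃ l, a l ≤ b' 0
    · obtain ⟨l, hl⟩ := hc
      exact zel_mem_of_min (s+1) a b' l (fun j => hl.trans (hmono (Fin.zero_le j)))
    · push Not at hc
      rw [zel_exchange]
      refine Submodule.sum_mem _ fun l _ => ?_
      have := zel_mem_of_min (k := k) (s+1) (Function.update a l (b' 0))
        (Function.update b' 0 (a l)) l (fun j => by
          rw [Function.update_self]
          rcases eq_or_ne j 0 with rfl | hj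
          · simpa using (hc l).le
          · rw [Function.update_of_ne hj]; exact hmono (Fin.zero_le j))
      have e1 : (fun i => (xv (Function.update a l (b' 0) i) : S1 k n))
          = Function.update (fun i => xv (a i)) l (xv (b' 0)) := by
        funext i; simp only [Function.update_apply]; split_ifs <;> rfl
      have e2 : (fun i => (xv (Function.update b' 0 (a l) i) : S1 k n))
          = Function.update (fun i => xv (b' i)) 0 (xv (a l)) := by
        funext i; simp only [Function.update_apply]; split_ifs <;> rfl
      rw [e1, e2] at this
      exact this

end
end
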